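/- Let K be a field of characteristic 0, let S = K[X_1^{a_1}⋯X_s^{a_s} | a_1 + ⋯ + a_s = b, a_i ≥ 0] be the b-th Veronese ring (the K-subalgebra of K[X_1,…,X_s] generated by all monomials of degree b), and let R be a standard graded algebra that is a homomorphic image of S via a graded surjection. Let n = dim_K R_1, d > 0, and r ≥ d + n − 1. Then for general linear forms l_1,…,l_r of K[X_1,…,X_s], the r linear forms of R given by the images of l_1^b,…,l_r^b satisfy property (Gr,d). -/

import Mathlib

/-- Polynomial functions on a `K`-vector space `V`: the subalgebra of `V → K`
generated by the linear functionals. -/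
def polyFuns (K V : Type*) [Field K] [AddCommGroup V] [Module K V] : Subalgebra K (V → K) :=
  Algebra.adjoin K {f : V → K | ∃ φ : V →ₗ[K] K, ⇑φ = f}

/-- A subset of (the affine space of) a `K`-vector space is Zariski closed if it is the
common zero locus of a family of polynomial functions. -/
def IsZClosed (K : Type*) {V : Type*} [Field K] [AddCommGroup V] [Module K V]
    (Z : Set V) : Prop :=
  ∃ S : Set (V → K), (∀ f ∈ S, f ∈ polyFuns K V) ∧ Z = {v | ∀ f ∈ S, f v = 0}

/-- A subset is Zariski open if its complement is Zariski closed. -/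
def IsZOpen (K : Type*) {V : Type*} [Field K] [AddCommGroup V] [Module K V]
    (U : Set V) : Prop :=
  IsZClosed K Uᶜ

/-- An irreducible variety: a nonempty Zariski closed set which is not the union of two
proper closed subsets. -/
def IsIrredVariety (K : Type*) {V : Type*} [Field K] [AddCommGroup V] [Module K V]
    (W : Set V) : Prop :=
  IsZClosed K W ∧ W.Nonempty ∧
    ∀ Z₁ Z₂ : Set V, IsZClosed K Z₁ → IsZClosed K Z₂ → W ⊆ Z₁ ∪ Z₂ → (W ⊆ Z₁ ∨ W ⊆ Z₂)

/-- Auxiliary recursion for `wordIdeal`: letters are booleans, `true` standing for the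
letter `c` (colon) and `false` for the letter `s` (sum). The natural number argument keeps
track of which linear form is to be used next (0-indexed). -/
def wordIdealAux {R : Type*} [CommRing R] (l : ℕ → R) : ℕ → Ideal R → List Bool → Ideal R
  | _, I, [] => I
  | j, I, a :: o =>
      wordIdealAux l (j + 1)
        (if a then I.colon (Ideal.span {l j}) else I ⊔ Ideal.span {l j}) o

/-- The ideal `I_{l,o}` attached to a sequence of (linear) forms `l` and a word `o` in the
letters `{c, s}` (here `c = true`, `s = false`): starting from `(0)`, the `j`-th letter
either colons (`c`) or adds (`s`) the `j`-th form. -/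
def wordIdeal {R : Type*} [CommRing R] (l : ℕ → R) (o : List Bool) : Ideal R :=
  wordIdealAux l 0 ⊥ o

/-- The degree `d` component `I ∩ R_d` of an ideal `I`, as a `K`-subspace of `𝒜 d`. -/
def homComp {K R : Type*} [Field K] [CommRing R] [Algebra K R]
    (𝒜 : ℕ → Submodule K R) (I : Ideal R) (d : ℕ) : Submodule K (𝒜 d) :=
  Submodule.comap (𝒜 d).subtype (Submodule.restrictScalars K I)

/-- `dim_K (I)_d`, the dimension of the degree `d` component of the (homogeneous) ideal `I`. -/
noncomputable def homDim {K R : Type*} [Field K] [CommRing R] [Algebra K R]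
    (𝒜 : ℕ → Submodule K R) (I : Ideal R) (d : ℕ) : ℕ :=
  Module.finrank K (homComp 𝒜 I d)

/-- `dim_K (R/I)_d`, the dimension of the degree `d` component of `R/I` for a
(homogeneous) ideal `I`, computed as `dim 𝒜 d / (I ∩ 𝒜 d)`. -/
noncomputable def quotDim {K R : Type*} [Field K] [CommRing R] [Algebra K R]
    (𝒜 : ℕ → Submodule K R) (I : Ideal R) (d : ℕ) : ℕ :=
  Module.finrank K ((𝒜 d) ⧸ homComp 𝒜 I d)

/-- `macaulayDown c d = c_⟨d⟩`: if `c = C(k_d,d) + … + C(k_1,1)` is the `d`-th Macaulay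
representation of `c`, then `c_⟨d⟩ = C(k_d - 1,d) + … + C(k_1 - 1,1)`; computed greedily. -/
def macaulayDown : ℕ → ℕ → ℕ
  | _, 0 => 0
  | c, d + 1 =>
      let k := Nat.findGreatest (fun k => Nat.choose k (d + 1) ≤ c) (c + d + 1)
      Nat.choose (k - 1) (d + 1) + macaulayDown (c - Nat.choose k (d + 1)) d

/-- Property (Gr,d) for the linear forms `l 0, …, l (r-1)` (letters: `true = c`,
`false = s`): for every word `o` of length `i ≤ r`,
(1) if `m ⊄ I_o` and `i < r` then `l_{i+1} ∉ I_o`;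
(2) if `i = r` and `|o|_c < d` then `m ⊆ I_o`;
(3) if `i ≤ r - 2` then `dim (I_{o,c,s})_{d - |o|_c - 1} ≤ dim (I_{o,s,c})_{d - |o|_c - 1}`. -/
def GrProp {K R : Type*} [Field K] [CommRing R] [Algebra K R]
    (𝒜 : ℕ → Submodule K R) [GradedAlgebra 𝒜] (l : ℕ → R) (r d : ℕ) : Prop :=
  ∀ o : List Bool, o.length ≤ r →
    (¬ (HomogeneousIdeal.irrelevant 𝒜).toIdeal ≤ wordIdeal l o → o.length < r →
        l o.length ∉ wordIdeal l o) ∧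
    (o.length = r → o.count true < d →
        (HomogeneousIdeal.irrelevant 𝒜).toIdeal ≤ wordIdeal l o) ∧
    (o.length + 2 ≤ r →
        homDim 𝒜 (wordIdeal l (o ++ [true, false])) (d - o.count true - 1) ≤
          homDim 𝒜 (wordIdeal l (o ++ [false, true])) (d - o.count true - 1))

/-!
Let `l_1, …, l_r` be the values at general points of a polynomial map whose image spans `R_1`; for
`z ↦ (∑ z_j X_j)^b` this spanning property is where characteristic `0` enters, through the
nonvanishing of the multinomial coefficients. Since `(I : a) : b = I : ab` and
`(I : a) + (b) = (I + (ab)) : a`, every `I_o` is of the form `(G : L)` with generators `G` and form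
`L` depending polynomially on the chosen points. Each `dim (I_o)_e` is then a combination of
dimensions of spaces spanned by polynomially varying vectors, hence constant for general points.

* (1) If `l_{i+1} ∈ I_o` for some general points, then `I_{o,s}` and `I_o` have the same generic
  dimension in degree one. Unless `R_1 ⊆ I_o`, this fails after moving `l_{i+1}` outside `I_o`,
  which depends only on `l_1, …, l_i`.
* (2) By (1), every letter `s` enlarges `(I_o)_1` until it is all of `R_1`, and a word of length `r`
  with fewer than `d` letters `c` has at least `n` letters `s`.
* (3) Swapping `l_{i+1}` and `l_{i+2}` does not change the generic dimension of `I_{o,c,s}`, and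
  `(I : b) + (a) ⊆ (I + (a)) : b`.
-/

open Filter Module

section ZariskiGeneric

open Polynomial

variable {K V V' : Type*} [Field K] [AddCommGroup V] [Module K V] [AddCommGroup V'] [Module K V']

lemma linearMap_mem_polyFuns (φ : V →ₗ[K] K) : ⇑φ ∈ polyFuns K V :=
  Algebra.subset_adjoin ⟨φ, rfl⟩

lemma comp_affineMap_mem_polyFuns (σ : V' →ᵃ[K] V) {f : V → K} (hf : f ∈ polyFuns K V) :
    f ∘ σ ∈ polyFuns K V' := by
  induction hf using Algebra.adjoin_induction with
  | mem f hf =>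
    obtain ⟨φ, rfl⟩ := hf
    have hdecomp : ⇑φ ∘ ⇑σ = ⇑(φ ∘ₗ σ.linear) + algebraMap K (V' → K) (φ (σ 0)) := by
      rw [AffineMap.decomp σ]
      ext y
      simp
    rw [hdecomp]
    exact add_mem (linearMap_mem_polyFuns _) (algebraMap_mem _ _)
  | algebraMap c => exact algebraMap_mem (polyFuns K V') c
  | add f g _ _ hf hg => exact add_mem hf hg
  | mul f g _ _ hf hg => exact mul_mem hf hg

lemma exists_polynomial_eval_eq_of_mem_polyFuns {f : K → K} (hf : f ∈ polyFuns K K) :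
    ∃ p : K[X], ∀ t, f t = p.eval t := by
  induction hf using Algebra.adjoin_induction with
  | mem f hf =>
    obtain ⟨φ, rfl⟩ := hf
    refine ⟨X * C (φ 1), fun t => ?_⟩
    rw [eval_mul, eval_X, eval_C, ← smul_eq_mul, ← map_smul, smul_eq_mul, mul_one]
  | algebraMap c => exact ⟨C c, by simp⟩
  | add f g _ _ hf hg =>
    obtain ⟨p, hp⟩ := hf
    obtain ⟨q, hq⟩ := hg
    exact ⟨p + q, by simp [hp, hq]⟩
  | mul f g _ _ hf hg =>
    obtain ⟨p, hp⟩ := hf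
    obtain ⟨q, hq⟩ := hg
    exact ⟨p * q, by simp [hp, hq]⟩

/- On the line through a point where `f` does not vanish and a point where `g` does not vanish,
both become nonzero polynomials in one variable. -/
lemma mul_ne_zero_of_mem_polyFuns [Infinite K] {f g : V → K} (hf : f ∈ polyFuns K V)
    (hg : g ∈ polyFuns K V) (hf0 : f ≠ 0) (hg0 : g ≠ 0) : f * g ≠ 0 := by
  obtain ⟨a, ha⟩ := Function.ne_iff.1 hf0
  obtain ⟨b, hb⟩ := Function.ne_iff.1 hg0
  let line : K →ᵃ[K] V := AffineMap.lineMap a b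
  obtain ⟨p, hp⟩ :=
    exists_polynomial_eval_eq_of_mem_polyFuns (comp_affineMap_mem_polyFuns line hf)
  obtain ⟨q, hq⟩ :=
    exists_polynomial_eval_eq_of_mem_polyFuns (comp_affineMap_mem_polyFuns line hg)
  have hp0 : p ≠ 0 := by
    rintro rfl
    exact ha (by simpa [line] using hp 0)
  have hq0 : q ≠ 0 := by
    rintro rfl
    exact hb (by simpa [line] using hq 1)
  intro hfg
  refine mul_ne_zero hp0 hq0 (Polynomial.funext fun t => ?_)
  rw [eval_mul, ← hp, ← hq, eval_zero]
  exact congr_fun hfg (line t)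

lemma det_mem_polyFuns {ι : Type*} [Fintype ι] [DecidableEq ι] {M : V → Matrix ι ι K}
    (hM : ∀ i j, (fun y => M y i j) ∈ polyFuns K V) : (fun y => (M y).det) ∈ polyFuns K V := by
  let N : Matrix ι ι (polyFuns K V) := Matrix.of fun i j => ⟨_, hM i j⟩
  convert N.det.2 using 1
  ext y
  exact (((Pi.evalRingHom (fun _ : V => K) y).comp (polyFuns K V).subtype).map_det N).symm

variable (K V) in
/-- The filter on `V` generated by the nonempty Zariski open sets: a property holds for general `y`
when it holds eventually along this filter. It is encoded by means of the basic open sets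
`{y | f y ≠ 0}`. -/
def zariskiGeneric [Infinite K] : Filter V where
  sets := {U | ∃ f ∈ polyFuns K V, f ≠ 0 ∧ Function.support f ⊆ U}
  univ_sets := ⟨1, one_mem _, one_ne_zero, Set.subset_univ _⟩
  sets_of_superset := by
    rintro U U' ⟨f, hf, hf0, hfU⟩ hUU'
    exact ⟨f, hf, hf0, hfU.trans hUU'⟩
  inter_sets := by
    rintro U U' ⟨f, hf, hf0, hfU⟩ ⟨g, hg, hg0, hgU'⟩
    exact ⟨f * g, mul_mem hf hg, mul_ne_zero_of_mem_polyFuns hf hg hf0 hg0,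
      (Function.support_mul f g).trans_subset (Set.inter_subset_inter hfU hgU')⟩

variable [Infinite K]

instance zariskiGeneric_neBot : (zariskiGeneric K V).NeBot := by
  refine ⟨fun hbot => ?_⟩
  obtain ⟨f, -, hf0, hf⟩ := Filter.empty_mem_iff_bot.2 hbot
  exact hf0 (Function.support_eq_empty_iff.1 (Set.subset_empty_iff.1 hf))

lemma eventually_zariskiGeneric_ne_zero {f : V → K} (hf : f ∈ polyFuns K V) (hf0 : f ≠ 0) :
    ∀ᶠ y in zariskiGeneric K V, f y ≠ 0 :=
  ⟨f, hf, hf0, subset_rfl⟩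

lemma eventually_zariskiGeneric_iff_exists_isZOpen {P : V → Prop} :
    (∀ᶠ y in zariskiGeneric K V, P y) ↔
      ∃ U : Set V, IsZOpen K U ∧ U.Nonempty ∧ ∀ y ∈ U, P y := by
  constructor
  · rintro ⟨f, hf, hf0, hfP⟩
    refine ⟨Function.support f, ⟨{f}, by simpa using hf, ?_⟩, Function.support_nonempty_iff.2 hf0,
      hfP⟩
    ext y
    simp
  · rintro ⟨U, ⟨S, hS, hUS⟩, ⟨a, ha⟩, hUP⟩
    obtain ⟨f, hfS, hfa⟩ : ∃ f ∈ S, f a ≠ 0 := by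
      by_contra! hzero
      exact (hUS.symm ▸ hzero : a ∈ Uᶜ) ha
    refine ⟨f, hS f hfS, Function.ne_iff.2 ⟨a, hfa⟩, fun y hy => hUP y ?_⟩
    by_contra hyU
    exact hy ((hUS ▸ hyU : y ∈ {v | ∀ f ∈ S, f v = 0}) f hfS)

lemma tendsto_zariskiGeneric (σ : V' →ᵃ[K] V) (hσ : Function.Surjective σ) :
    Tendsto σ (zariskiGeneric K V') (zariskiGeneric K V) := by
  rintro U ⟨f, hf, hf0, hfU⟩
  refine ⟨f ∘ σ, comp_affineMap_mem_polyFuns σ hf, fun hzero => hf0 ?_, fun y hy => hfU hy⟩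
  exact hσ.injective_comp_right hzero

lemma eventually_eventually_update {ι : Type*} [DecidableEq ι] {P : (ι → V) → Prop}
    (hP : ∀ᶠ y in zariskiGeneric K (ι → V), P y) (i : ι) :
    ∀ᶠ y in zariskiGeneric K (ι → V), ∀ᶠ z in zariskiGeneric K V, P (Function.update y i z) := by
  obtain ⟨f, hf, hf0, hfP⟩ := hP
  filter_upwards [eventually_zariskiGeneric_ne_zero hf hf0] with y hy
  let insertAt : V →ᵃ[K] (ι → V) :=
    (LinearMap.single K (fun _ : ι => V) i).toAffineMap +
      AffineMap.const K V (Function.update y i 0)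
  have hinsertAt : ∀ z, insertAt z = Function.update y i z := by
    intro z
    ext j
    rcases eq_or_ne j i with rfl | hj
    · simp [insertAt]
    · simp [insertAt, hj]
  refine ⟨f ∘ insertAt, comp_affineMap_mem_polyFuns insertAt hf,
    Function.ne_iff.2 ⟨y i, ?_⟩, fun z hz => ?_⟩
  · simpa [hinsertAt] using hy
  · have hPz : P (insertAt z) := hfP hz
    rwa [hinsertAt] at hPz

end ZariskiGeneric

section PolyMaps

variable {K V V' M : Type*} [Field K] [AddCommGroup V] [Module K V] [AddCommGroup V'] [Module K V']
  [AddCommGroup M] [Module K M]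

variable (K V M) in
/-- Polynomial maps from `V` to a `K`-vector space `M`, that is, finite sums of maps
`y ↦ f y • u` with `f` a polynomial function and `u : M`. -/
def polyMaps : Submodule K (V → M) :=
  Submodule.span K {p | ∃ f ∈ polyFuns K V, ∃ u : M, p = fun y => f y • u}

lemma smul_const_mem_polyMaps {f : V → K} (hf : f ∈ polyFuns K V) (u : M) :
    (fun y => f y • u) ∈ polyMaps K V M :=
  Submodule.subset_span ⟨f, hf, u, rfl⟩

lemma const_mem_polyMaps (u : M) : (fun _ => u) ∈ polyMaps K V M := by
  simpa using smul_const_mem_polyMaps (one_mem (polyFuns K V)) u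

lemma comp_linearMap_mem_polyMaps (σ : V' →ₗ[K] V) {p : V → M} (hp : p ∈ polyMaps K V M) :
    p ∘ σ ∈ polyMaps K V' M := by
  suffices polyMaps K V M ≤ (polyMaps K V' M).comap (LinearMap.funLeft K M σ) from this hp
  refine Submodule.span_le.2 ?_
  rintro _ ⟨f, hf, u, rfl⟩
  exact smul_const_mem_polyMaps (comp_affineMap_mem_polyFuns σ.toAffineMap hf) u

lemma linearMap_comp_mem_polyFuns (ψ : M →ₗ[K] K) {p : V → M} (hp : p ∈ polyMaps K V M) :
    ψ ∘ p ∈ polyFuns K V := by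
  suffices polyMaps K V M ≤ (Subalgebra.toSubmodule (polyFuns K V)).comap (ψ.compLeft V) from
    this hp
  refine Submodule.span_le.2 ?_
  rintro _ ⟨f, hf, u, rfl⟩
  have hcomp : ψ.compLeft V (fun y => f y • u) = ψ u • f := by
    ext y
    simp [mul_comm]
  rw [SetLike.mem_coe, Submodule.mem_comap, hcomp]
  exact Subalgebra.smul_mem _ hf _

lemma mul_mem_polyMaps {R : Type*} [CommRing R] [Algebra K R] {p q : V → R}
    (hp : p ∈ polyMaps K V R) (hq : q ∈ polyMaps K V R) : p * q ∈ polyMaps K V R := by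
  suffices polyMaps K V R * polyMaps K V R ≤ polyMaps K V R from this (Submodule.mul_mem_mul hp hq)
  nth_rw 1 2 [polyMaps]
  rw [Submodule.span_mul_span, Submodule.span_le]
  rintro _ ⟨_, ⟨f, hf, u, rfl⟩, _, ⟨g, hg, v, rfl⟩, rfl⟩
  have hmul : (fun y => f y • u) * (fun y => g y • v) = fun y => (f * g) y • (u * v) := by
    ext y
    exact smul_mul_smul_comm _ _ _ _
  exact Set.mem_of_eq_of_mem hmul (smul_const_mem_polyMaps (mul_mem hf hg) _)

variable [Infinite K]

lemma eventually_zariskiGeneric_notMem {p : V → M} (hp : p ∈ polyMaps K V M) {N : Submodule K M}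
    {a : V} (ha : p a ∉ N) : ∀ᶠ y in zariskiGeneric K V, p y ∉ N := by
  obtain ⟨ψ, hψa, hψN⟩ := Submodule.exists_le_ker_of_notMem ha
  filter_upwards [eventually_zariskiGeneric_ne_zero (linearMap_comp_mem_polyFuns ψ hp)
    (Function.ne_iff.2 ⟨a, hψa⟩)] with y hy hyN
  exact hy (hψN hyN)

/- A left inverse `Φ` of `Finsupp.linearCombination K (q · a)` gives a square matrix `Φ (q j y) i`
of polynomial functions which is the identity at `y = a`. -/
lemma eventually_zariskiGeneric_linearIndependent {ι : Type*} [Finite ι] {q : ι → V → M}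
    (hq : ∀ i, q i ∈ polyMaps K V M) {a : V} (ha : LinearIndependent K fun i => q i a) :
    ∀ᶠ y in zariskiGeneric K V, LinearIndependent K fun i => q i y := by
  classical
  have := Fintype.ofFinite ι
  obtain ⟨Φ, hΦ⟩ := (Finsupp.linearCombination K fun i => q i a).exists_leftInverse_of_injective
    (LinearMap.ker_eq_bot.2 ha)
  have hΦq : ∀ j, Φ (q j a) = Finsupp.single j 1 := fun j => by
    simpa using LinearMap.congr_fun hΦ (Finsupp.single j 1)
  let minor : V → Matrix ι ι K := fun y => Matrix.of fun i j => Φ (q j y) i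
  have hminor : (fun y => (minor y).det) ∈ polyFuns K V :=
    det_mem_polyFuns fun i j => linearMap_comp_mem_polyFuns (Finsupp.lapply i ∘ₗ Φ) (hq j)
  have hminor_a : minor a = 1 := by
    ext i j
    simp [minor, hΦq, Matrix.one_apply, Finsupp.single_apply, eq_comm]
  have hdet_ne : (fun y => (minor y).det) ≠ 0 := Function.ne_iff.2 ⟨a, by simp [hminor_a]⟩
  filter_upwards [eventually_zariskiGeneric_ne_zero hminor hdet_ne] with y hy
  exact LinearIndependent.of_comp (Finsupp.lcoeFun (R := K) ∘ₗ Φ)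
    (Matrix.linearIndependent_cols_of_det_ne_zero hy)

lemma eventually_zariskiGeneric_finrank_map_proj_le {P : Submodule K (V → M)}
    (hP : P ≤ polyMaps K V M) [∀ y, FiniteDimensional K (P.map (LinearMap.proj y))] (a : V) :
    ∀ᶠ y in zariskiGeneric K V,
      finrank K (P.map (LinearMap.proj a)) ≤ finrank K (P.map (LinearMap.proj y)) := by
  let basis := finBasis K (P.map (LinearMap.proj a))
  choose q hqP hqa using fun i => (basis i).2
  have hind : LinearIndependent K fun i => q i a := by
    have hbasis := basis.linearIndependent.map' _ (P.map (LinearMap.proj a)).ker_subtype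
    exact (funext hqa : (fun i => q i a) = _) ▸ hbasis
  filter_upwards [eventually_zariskiGeneric_linearIndependent (fun i => hP (hqP i)) hind] with y hy
  calc finrank K (P.map (LinearMap.proj a))
      = finrank K (Submodule.span K (Set.range fun i => q i y)) := by
        rw [finrank_span_eq_card hy, Fintype.card_fin]
    _ ≤ finrank K (P.map (LinearMap.proj y)) := by
        refine Submodule.finrank_mono (Submodule.span_le.2 ?_)
        rintro _ ⟨i, rfl⟩
        exact ⟨q i, hqP i, rfl⟩

lemma exists_eventually_zariskiGeneric_finrank_map_proj_eq {P : Submodule K (V → M)}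
    (hP : P ≤ polyMaps K V M) {E : Submodule K M} [FiniteDimensional K E]
    (hPE : ∀ y, P.map (LinearMap.proj y) ≤ E) :
    ∃ c, ∀ᶠ y in zariskiGeneric K V, finrank K (P.map (LinearMap.proj y)) = c := by
  let rank : V → ℕ := fun y => finrank K (P.map (LinearMap.proj y))
  have := fun y => Submodule.finiteDimensional_of_le (hPE y)
  have hbdd : BddAbove (Set.range rank) :=
    ⟨finrank K E, Set.forall_mem_range.2 fun y => Submodule.finrank_mono (hPE y)⟩
  obtain ⟨a, ha⟩ := Nat.sSup_mem (Set.range_nonempty rank) hbdd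
  refine ⟨rank a, ?_⟩
  filter_upwards [eventually_zariskiGeneric_finrank_map_proj_le hP a] with y hy
  exact le_antisymm (ha ▸ le_csSup hbdd ⟨y, rfl⟩) hy

end PolyMaps

section GradedPieces

variable {K R : Type*} [Field K] [CommRing R] [Algebra K R]

lemma finiteDimensional_of_eq_mul (𝒜 : ℕ → Submodule K R) (h0 : 𝒜 0 = 1)
    (hstd : ∀ m, 𝒜 (m + 1) = 𝒜 1 * 𝒜 m) [FiniteDimensional K (𝒜 1)] (m : ℕ) :
    FiniteDimensional K (𝒜 m) := by
  rw [← Submodule.fg_iff_finiteDimensional]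
  induction m with
  | zero =>
    rw [h0, Submodule.one_eq_span]
    exact Submodule.fg_span_singleton 1
  | succ m ih =>
    rw [hstd]
    exact ((Submodule.fg_iff_finiteDimensional _).2 inferInstance).mul ih

lemma irrelevant_le_of_degree_one_le (𝒜 : ℕ → Submodule K R) [GradedAlgebra 𝒜]
    (hstd : ∀ m, 𝒜 (m + 1) = 𝒜 1 * 𝒜 m) {I : Ideal R} (hI : 𝒜 1 ≤ I.restrictScalars K) :
    (HomogeneousIdeal.irrelevant 𝒜).toIdeal ≤ I := by
  rw [HomogeneousIdeal.toIdeal_irrelevant_le]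
  intro i hi
  obtain ⟨m, rfl⟩ := Nat.exists_eq_succ_of_ne_zero hi.ne'
  have hle : 𝒜 (m + 1) ≤ I.restrictScalars K := by
    rw [hstd, Submodule.mul_le]
    exact fun a ha c _ => I.mul_mem_right c (hI ha)
  exact hle

lemma degree_one_eq_span_range_X (𝒜 : ℕ → Submodule K R) [GradedAlgebra 𝒜] (h0 : 𝒜 0 = 1)
    {ι : Type*} (g : MvPolynomial ι K →ₐ[K] R) (hsurj : Function.Surjective g)
    (hg1 : ∀ m, g (MvPolynomial.X m) ∈ 𝒜 1) :
    𝒜 1 = Submodule.span K (Set.range fun m => g (MvPolynomial.X m)) := by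
  refine le_antisymm (fun x hx => ?_) (Submodule.span_le.2 (Set.range_subset_iff.2 hg1))
  suffices hproj : ∀ p, (DirectSum.decompose 𝒜 (g p) 1 : R) ∈
      Submodule.span K (Set.range fun m => g (MvPolynomial.X m)) by
    obtain ⟨p, rfl⟩ := hsurj x
    simpa only [DirectSum.decompose_of_mem_same 𝒜 hx] using hproj p
  intro p
  induction p using MvPolynomial.induction_on with
  | C a =>
    have hdeg : g (MvPolynomial.C a) ∈ 𝒜 0 := by
      rw [h0, Submodule.mem_one]
      exact ⟨a, (g.commutes a).symm⟩
    rw [DirectSum.decompose_of_mem_ne 𝒜 hdeg zero_ne_one]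
    exact zero_mem _
  | add p q hp hq =>
    rw [map_add, DirectSum.decompose_add]
    exact add_mem hp hq
  | mul_X p m _ =>
    have hmul := DirectSum.coe_decompose_mul_add_of_right_mem 𝒜 (i := 0) (a := g p) (hg1 m)
    have hconst : (DirectSum.decompose 𝒜 (g p) 0 : R) ∈ (1 : Submodule K R) :=
      h0 ▸ SetLike.coe_mem _
    obtain ⟨a, ha⟩ := Submodule.mem_one.1 hconst
    rw [zero_add] at hmul
    rw [map_mul, hmul, ← ha, ← Algebra.smul_def]
    exact Submodule.smul_mem _ _ (Submodule.subset_span ⟨m, rfl⟩)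

variable {𝒜 : ℕ → Submodule K R} {I J : Ideal R} {e : ℕ} [FiniteDimensional K (𝒜 e)]

lemma homDim_mono (hIJ : I ≤ J) : homDim 𝒜 I e ≤ homDim 𝒜 J e :=
  Submodule.finrank_mono fun _ hx => hIJ hx

lemma homDim_lt_of_notMem (hIJ : I ≤ J) {x : R} (hx : x ∈ 𝒜 e) (hxJ : x ∈ J) (hxI : x ∉ I) :
    homDim 𝒜 I e < homDim 𝒜 J e :=
  Submodule.finrank_lt_finrank_of_lt <| SetLike.lt_iff_le_and_exists.2
    ⟨fun _ hx => hIJ hx, ⟨x, hx⟩, hxJ, hxI⟩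

lemma le_of_finrank_le_homDim (h : finrank K (𝒜 e) ≤ homDim 𝒜 I e) :
    𝒜 e ≤ I.restrictScalars K := by
  have htop : homComp 𝒜 I e = ⊤ :=
    Submodule.eq_top_of_finrank_eq (le_antisymm (Submodule.finrank_le _) h)
  intro x hx
  exact (htop ▸ Submodule.mem_top : (⟨x, hx⟩ : 𝒜 e) ∈ homComp 𝒜 I e)

end GradedPieces

section ColonFamilies

variable {K V R : Type*} [Field K] [AddCommGroup V] [Module K V] [CommRing R] [Algebra K R]

lemma colon_span_singleton_colon (I : Ideal R) (a b : R) :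
    (I.colon (Ideal.span {a})).colon (Ideal.span {b}) = I.colon (Ideal.span {a * b}) := by
  ext x
  simp only [Ideal.mem_colon_span_singleton, mul_assoc, mul_comm a b]

lemma colon_span_singleton_sup (I : Ideal R) (a b : R) :
    I.colon (Ideal.span {a}) ⊔ Ideal.span {b} =
      (I ⊔ Ideal.span {a * b}).colon (Ideal.span {a}) := by
  ext x
  simp only [Ideal.mem_colon_span_singleton, Submodule.mem_sup, Ideal.mem_span_singleton']
  constructor
  · rintro ⟨u, hu, _, ⟨w, rfl⟩, rfl⟩
    exact ⟨u * a, hu, _, ⟨w, rfl⟩, by ring⟩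
  · rintro ⟨u, hu, _, ⟨w, rfl⟩, hx⟩
    refine ⟨x - w * b, ?_, _, ⟨w, rfl⟩, by ring⟩
    convert hu using 1
    linear_combination -hx

lemma finrank_comap_add_finrank_range_sup {E F : Type*} [AddCommGroup E] [Module K E]
    [AddCommGroup F] [Module K F] [FiniteDimensional K E] (f : E →ₗ[K] F) (W : Submodule K F)
    [FiniteDimensional K W] :
    finrank K (W.comap f) + finrank K (f.range ⊔ W : Submodule K F) =
      finrank K E + finrank K W := by
  have hsup := Submodule.finrank_sup_add_finrank_inf_eq f.range W
  have hrank := f.finrank_range_add_finrank_ker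
  have hrestrict := (f.domRestrict (W.comap f)).finrank_range_add_finrank_ker
  have hker : finrank K (f.domRestrict (W.comap f)).ker = finrank K f.ker := by
    rw [LinearMap.ker_domRestrict]
    exact (Submodule.comapSubtypeEquivOfLe (LinearMap.ker_le_comap f)).finrank_eq
  rw [LinearMap.range_domRestrict, Submodule.map_comap_eq, hker] at hrestrict
  omega

/- `(I : a)_e` is the preimage of `I_{e+c}` under multiplication by `a`. -/
lemma homDim_colon_add_finrank_sup {𝒜 : ℕ → Submodule K R} [SetLike.GradedMul 𝒜] (I : Ideal R)
    {a : R} {c : ℕ} (ha : a ∈ 𝒜 c) (e : ℕ) [FiniteDimensional K (𝒜 e)]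
    [FiniteDimensional K (𝒜 (e + c))] :
    homDim 𝒜 (I.colon (Ideal.span {a})) e +
        finrank K ((𝒜 e).map (LinearMap.mulRight K a) ⊔ (I.restrictScalars K ⊓ 𝒜 (e + c)) :
          Submodule K R) =
      finrank K (𝒜 e) + finrank K (I.restrictScalars K ⊓ 𝒜 (e + c) : Submodule K R) := by
  let mulA : 𝒜 e →ₗ[K] R := LinearMap.mulRight K a ∘ₗ (𝒜 e).subtype
  have hrange : mulA.range = (𝒜 e).map (LinearMap.mulRight K a) := by
    rw [LinearMap.range_comp, Submodule.range_subtype]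
  have hcomap : (I.restrictScalars K ⊓ 𝒜 (e + c)).comap mulA =
      homComp 𝒜 (I.colon (Ideal.span {a})) e := by
    ext u
    simp [homComp, mulA, SetLike.mul_mem_graded u.2 ha]
  rw [homDim, ← hcomap, ← hrange, finrank_comap_add_finrank_range_sup]

variable (V) in
/-- Polynomial maps `V → R` taking values in the graded piece `𝒜 k`. -/
def homPolyMaps (𝒜 : ℕ → Submodule K R) (k : ℕ) : Submodule K (V → R) :=
  polyMaps K V R ⊓ Submodule.pi Set.univ fun _ => 𝒜 k

lemma mem_homPolyMaps {𝒜 : ℕ → Submodule K R} {k : ℕ} {p : V → R} :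
    p ∈ homPolyMaps V 𝒜 k ↔ p ∈ polyMaps K V R ∧ ∀ y, p y ∈ 𝒜 k := by
  simp [homPolyMaps, Submodule.mem_pi]

lemma const_mem_homPolyMaps {𝒜 : ℕ → Submodule K R} {k : ℕ} {u : R} (hu : u ∈ 𝒜 k) :
    (fun _ => u) ∈ homPolyMaps V 𝒜 k :=
  mem_homPolyMaps.2 ⟨const_mem_polyMaps u, fun _ => hu⟩

lemma exists_eventually_finrank_map_proj_eq_of_le_homPolyMaps [Infinite K]
    {𝒜 : ℕ → Submodule K R} {k : ℕ} [FiniteDimensional K (𝒜 k)] {P : Submodule K (V → R)}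
    (hP : P ≤ homPolyMaps V 𝒜 k) :
    ∃ m, ∀ᶠ y in zariskiGeneric K V, finrank K (P.map (LinearMap.proj y)) = m := by
  refine exists_eventually_zariskiGeneric_finrank_map_proj_eq (hP.trans inf_le_left)
    (E := 𝒜 k) fun y => ?_
  rintro _ ⟨p, hp, rfl⟩
  exact (mem_homPolyMaps.1 (hP hp)).2 y

variable (𝒜 : ℕ → Submodule K R) [GradedAlgebra 𝒜]

lemma mul_mem_homPolyMaps {k m : ℕ} {p q : V → R} (hp : p ∈ homPolyMaps V 𝒜 k)
    (hq : q ∈ homPolyMaps V 𝒜 m) : p * q ∈ homPolyMaps V 𝒜 (k + m) := by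
  rw [mem_homPolyMaps] at hp hq ⊢
  exact ⟨mul_mem_polyMaps hp.1 hq.1, fun y => SetLike.mul_mem_graded (hp.2 y) (hq.2 y)⟩

lemma map_evalRingHom_inf_eq_map_proj {G : Set (V → R)}
    (hG : ∀ p ∈ G, SetLike.IsHomogeneousElem (homPolyMaps V 𝒜) p) (N : ℕ) (y : V) :
    ((Ideal.span G).map (Pi.evalRingHom (fun _ : V => R) y)).restrictScalars K ⊓ 𝒜 N =
      ((Ideal.span G).restrictScalars K ⊓ homPolyMaps V 𝒜 N).map (LinearMap.proj y) := by
  apply le_antisymm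
  · rintro x ⟨hx, hxN⟩
    suffices hcomponent : ∀ x ∈ Ideal.span (Pi.evalRingHom (fun _ : V => R) y '' G),
        (DirectSum.decompose 𝒜 x N : R) ∈
          ((Ideal.span G).restrictScalars K ⊓ homPolyMaps V 𝒜 N).map (LinearMap.proj y) by
      simpa only [DirectSum.decompose_of_mem_same 𝒜 hxN] using
        hcomponent x (Ideal.map_span (Pi.evalRingHom (fun _ : V => R) y) G ▸ hx)
    intro x hx
    induction hx using Submodule.closure_induction with
    | zero => simp
    | add x z _ _ hx hz =>
      rw [DirectSum.decompose_add]
      exact add_mem hx hz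
    | smul_mem a x hx =>
      obtain ⟨p, hp, rfl⟩ := hx
      obtain ⟨k, hk⟩ := hG p hp
      rw [smul_eq_mul, Pi.evalRingHom_apply,
        DirectSum.coe_decompose_mul_of_right_mem 𝒜 N ((mem_homPolyMaps.1 hk).2 y)]
      split_ifs with hkN
      · have hmul := mul_mem_homPolyMaps 𝒜
          (const_mem_homPolyMaps (SetLike.coe_mem (DirectSum.decompose 𝒜 a (N - k)))) hk
        rw [Nat.sub_add_cancel hkN] at hmul
        exact ⟨_, ⟨Ideal.mul_mem_left _ _ (Ideal.subset_span hp), hmul⟩, rfl⟩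
      · exact zero_mem _
  · rintro _ ⟨p, ⟨hpG, hpN⟩, rfl⟩
    exact ⟨Ideal.mem_map_of_mem _ hpG, (mem_homPolyMaps.1 hpN).2 y⟩

/-- Families of ideals `I y` of the form `(G_y : L_y)`, with `L_y` a form and `G_y` a set of forms,
all varying polynomially with `y` and of degrees independent of `y`. -/
def IsPolyColonFamily (I : V → Ideal R) : Prop :=
  ∃ (G : Set (V → R)) (L : V → R) (c : ℕ),
    (∀ p ∈ G, SetLike.IsHomogeneousElem (homPolyMaps V 𝒜) p) ∧ L ∈ homPolyMaps V 𝒜 c ∧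
    ∀ y, I y = ((Ideal.span G).map (Pi.evalRingHom (fun _ : V => R) y)).colon (Ideal.span {L y})

namespace IsPolyColonFamily

lemma bot : IsPolyColonFamily 𝒜 fun _ : V => (⊥ : Ideal R) := by
  refine ⟨∅, 1, 0, by simp, const_mem_homPolyMaps SetLike.GradedOne.one_mem, fun y => ?_⟩
  ext x
  simp [Ideal.map_bot]

variable {𝒜} {I : V → Ideal R} {l : V → R}

lemma colon (hI : IsPolyColonFamily 𝒜 I) {k : ℕ} (hl : l ∈ homPolyMaps V 𝒜 k) :
    IsPolyColonFamily 𝒜 fun y => (I y).colon (Ideal.span {l y}) := by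
  obtain ⟨G, L, c, hG, hL, hIGL⟩ := hI
  refine ⟨G, L * l, c + k, hG, mul_mem_homPolyMaps 𝒜 hL hl, fun y => ?_⟩
  simp only [hIGL, colon_span_singleton_colon, Pi.mul_apply]

lemma sup (hI : IsPolyColonFamily 𝒜 I) {k : ℕ} (hl : l ∈ homPolyMaps V 𝒜 k) :
    IsPolyColonFamily 𝒜 fun y => I y ⊔ Ideal.span {l y} := by
  obtain ⟨G, L, c, hG, hL, hIGL⟩ := hI
  refine ⟨insert (L * l) G, L, c, ?_, hL, fun y => ?_⟩
  · rintro p (rfl | hp)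
    · exact ⟨c + k, mul_mem_homPolyMaps 𝒜 hL hl⟩
    · exact hG p hp
  · simp only [hIGL, colon_span_singleton_sup, Ideal.span_insert, Ideal.map_sup]
    rw [Ideal.map_span _ {L * l}, Set.image_singleton, sup_comm]
    rfl

lemma wordIdealAux {l : V → ℕ → R} (hl : ∀ t, (fun y => l y t) ∈ homPolyMaps V 𝒜 1)
    (hI : IsPolyColonFamily 𝒜 I) (j : ℕ) (o : List Bool) :
    IsPolyColonFamily 𝒜 fun y => wordIdealAux (l y) j (I y) o := by
  induction o generalizing j I with
  | nil => exact hI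
  | cons a o ih =>
    cases a with
    | true => exact ih (hI.colon (hl j)) (j + 1)
    | false => exact ih (hI.sup (hl j)) (j + 1)

lemma exists_eventually_homDim_eq [Infinite K] [∀ m, FiniteDimensional K (𝒜 m)]
    (hI : IsPolyColonFamily 𝒜 I) (e : ℕ) :
    ∃ m, ∀ᶠ y in zariskiGeneric K V, homDim 𝒜 (I y) e = m := by
  obtain ⟨G, L, c, hG, hL, hIGL⟩ := hI
  let J : Submodule K (V → R) := (Ideal.span G).restrictScalars K ⊓ homPolyMaps V 𝒜 (e + c)
  let T : Submodule K (V → R) :=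
    (𝒜 e).map (LinearMap.mulRight K L ∘ₗ (Pi.constAlgHom K V R).toLinearMap)
  have hJ : J ≤ homPolyMaps V 𝒜 (e + c) := inf_le_right
  have hT : T ≤ homPolyMaps V 𝒜 (e + c) := by
    rintro _ ⟨u, hu, rfl⟩
    exact mul_mem_homPolyMaps 𝒜 (const_mem_homPolyMaps hu) hL
  have hT_map : ∀ y, T.map (LinearMap.proj y) = (𝒜 e).map (LinearMap.mulRight K (L y)) :=
    fun y => (Submodule.map_comp _ _ _).symm
  obtain ⟨m₁, hm₁⟩ := exists_eventually_finrank_map_proj_eq_of_le_homPolyMaps hJ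
  obtain ⟨m₂, hm₂⟩ := exists_eventually_finrank_map_proj_eq_of_le_homPolyMaps (sup_le hT hJ)
  refine ⟨finrank K (𝒜 e) + m₁ - m₂, ?_⟩
  filter_upwards [hm₁, hm₂] with y hy₁ hy₂
  have hdim := homDim_colon_add_finrank_sup ((Ideal.span G).map (Pi.evalRingHom (fun _ => R) y))
    ((mem_homPolyMaps.1 hL).2 y) e
  rw [map_evalRingHom_inf_eq_map_proj 𝒜 hG, ← hT_map, ← Submodule.map_sup, hy₁, hy₂, ← hIGL] at hdim
  exact Nat.eq_sub_of_add_eq hdim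

end IsPolyColonFamily

end ColonFamilies

section Words

variable {R : Type*} [CommRing R] (l : ℕ → R)

lemma wordIdealAux_append (j : ℕ) (I : Ideal R) (o o' : List Bool) :
    wordIdealAux l j I (o ++ o') = wordIdealAux l (j + o.length) (wordIdealAux l j I o) o' := by
  induction o generalizing j I with
  | nil => rfl
  | cons a o ih =>
    simp only [List.cons_append, wordIdealAux, ih, List.length_cons]
    congr 1
    omega

lemma wordIdeal_append_true (o : List Bool) :
    wordIdeal l (o ++ [true]) = (wordIdeal l o).colon (Ideal.span {l o.length}) := by
  simp [wordIdeal, wordIdealAux_append, wordIdealAux]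

lemma wordIdeal_append_false (o : List Bool) :
    wordIdeal l (o ++ [false]) = wordIdeal l o ⊔ Ideal.span {l o.length} := by
  simp [wordIdeal, wordIdealAux_append, wordIdealAux]

lemma mem_wordIdeal_append_false (o : List Bool) : l o.length ∈ wordIdeal l (o ++ [false]) :=
  wordIdeal_append_false l o ▸ Ideal.mem_sup_right (Ideal.mem_span_singleton_self _)

lemma wordIdeal_le_append_singleton (o : List Bool) (a : Bool) :
    wordIdeal l o ≤ wordIdeal l (o ++ [a]) := by
  cases a with
  | true => exact wordIdeal_append_true l o ▸ Ideal.le_colon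
  | false => exact wordIdeal_append_false l o ▸ le_sup_left

variable {l} in
lemma wordIdeal_congr {l' : ℕ → R} {o : List Bool} (h : ∀ t < o.length, l t = l' t) :
    wordIdeal l o = wordIdeal l' o := by
  induction o using List.reverseRecOn with
  | nil => rfl
  | append_singleton o a ih =>
    simp only [List.length_append, List.length_singleton, Nat.lt_succ_iff] at h
    have hlast := h o.length le_rfl
    have hinit := ih fun t ht => h t ht.le
    cases a with
    | true => rw [wordIdeal_append_true, wordIdeal_append_true, hlast, hinit]
    | false => rw [wordIdeal_append_false, wordIdeal_append_false, hlast, hinit]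

lemma wordIdeal_update_length (o : List Bool) (x : R) :
    wordIdeal (Function.update l o.length x) o = wordIdeal l o :=
  wordIdeal_congr fun _ ht => Function.update_of_ne ht.ne _ _

lemma wordIdeal_comp_swap_append_true_false_le (o : List Bool) :
    wordIdeal (l ∘ Equiv.swap o.length (o.length + 1)) (o ++ [true, false]) ≤
      wordIdeal l (o ++ [false, true]) := by
  have hprefix : wordIdeal (l ∘ Equiv.swap o.length (o.length + 1)) o = wordIdeal l o :=
    wordIdeal_congr fun t ht => congrArg l
      (Equiv.swap_apply_of_ne_of_ne ht.ne (ht.trans (Nat.lt_succ_self _)).ne)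
  rw [List.append_cons o true, List.append_cons o false, wordIdeal_append_false,
    wordIdeal_append_true, wordIdeal_append_true, wordIdeal_append_false, hprefix]
  simp only [List.length_append, List.length_singleton, Function.comp_apply,
    Equiv.swap_apply_left, Equiv.swap_apply_right, colon_span_singleton_sup]
  refine Submodule.colon_mono (sup_le_sup_left ?_ _) subset_rfl
  exact Ideal.span_singleton_le_span_singleton.2 (dvd_mul_left _ _)

end Words

section Gr

variable {K R : Type*} [Field K] [CommRing R] [Algebra K R] {𝒜 : ℕ → Submodule K R}
  [GradedAlgebra 𝒜] {l : ℕ → R} {r : ℕ}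

lemma irrelevant_le_or_count_false_le_homDim [FiniteDimensional K (𝒜 1)] (hl : ∀ t, l t ∈ 𝒜 1)
    (hnotMem : ∀ o : List Bool, o.length < r →
      ¬ (HomogeneousIdeal.irrelevant 𝒜).toIdeal ≤ wordIdeal l o → l o.length ∉ wordIdeal l o)
    (o : List Bool) (ho : o.length ≤ r) :
    (HomogeneousIdeal.irrelevant 𝒜).toIdeal ≤ wordIdeal l o ∨
      o.count false ≤ homDim 𝒜 (wordIdeal l o) 1 := by
  induction o using List.reverseRecOn with
  | nil => exact .inr (Nat.zero_le _)
  | append_singleton o a ih =>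
    have ho' : o.length < r := by simpa using ho
    have hle := wordIdeal_le_append_singleton l o a
    by_cases hm : (HomogeneousIdeal.irrelevant 𝒜).toIdeal ≤ wordIdeal l o
    · exact .inl (hm.trans hle)
    · have hcount := (ih ho'.le).resolve_left hm
      right
      cases a with
      | true => simpa using hcount.trans (homDim_mono hle)
      | false =>
        simpa using hcount.trans_lt
          (homDim_lt_of_notMem hle (hl _) (mem_wordIdeal_append_false l o) (hnotMem o ho' hm))

lemma irrelevant_le_wordIdeal_of_count_true_lt [FiniteDimensional K (𝒜 1)]
    (hstd : ∀ m, 𝒜 (m + 1) = 𝒜 1 * 𝒜 m) (hl : ∀ t, l t ∈ 𝒜 1)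
    (hnotMem : ∀ o : List Bool, o.length < r →
      ¬ (HomogeneousIdeal.irrelevant 𝒜).toIdeal ≤ wordIdeal l o → l o.length ∉ wordIdeal l o)
    {d : ℕ} (hr : finrank K (𝒜 1) + d ≤ r + 1) {o : List Bool} (ho : o.length = r)
    (hcount : o.count true < d) : (HomogeneousIdeal.irrelevant 𝒜).toIdeal ≤ wordIdeal l o := by
  refine (irrelevant_le_or_count_false_le_homDim hl hnotMem o ho.le).elim id fun hfalse => ?_
  refine irrelevant_le_of_degree_one_le 𝒜 hstd (le_of_finrank_le_homDim (le_trans ?_ hfalse))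
  have := o.count_true_add_count_false
  omega

end Gr

section GeneralForms

/-- The finite sequence `x 0, …, x (r - 1)` continued by zeros. -/
def zeroExtend {M : Type*} [Zero M] {r : ℕ} (x : Fin r → M) : ℕ → M :=
  fun t => if h : t < r then x ⟨t, h⟩ else 0

lemma zeroExtend_update {M : Type*} [Zero M] {r : ℕ} (x : Fin r → M) (i : Fin r) (u : M) :
    zeroExtend (Function.update x i u) = Function.update (zeroExtend x) i u := by
  ext t
  rcases eq_or_ne t i with rfl | ht
  · simp [zeroExtend]
  · simp [zeroExtend, Fin.ext_iff, ht]

lemma zeroExtend_comp_swap {M : Type*} [Zero M] {r : ℕ} (x : Fin r → M) (i j : Fin r) :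
    zeroExtend (x ∘ Equiv.swap i j) = zeroExtend x ∘ Equiv.swap (i : ℕ) j := by
  ext t
  rcases eq_or_ne t i with rfl | hti
  · simp [zeroExtend]
  rcases eq_or_ne t j with rfl | htj
  · simp [zeroExtend]
  · rw [Function.comp_apply, Equiv.swap_apply_of_ne_of_ne hti htj]
    unfold zeroExtend
    split_ifs with ht
    · rw [Function.comp_apply, Equiv.swap_apply_of_ne_of_ne] <;> simpa [Fin.ext_iff]
    · rfl

variable {K W R : Type*} [Field K] [AddCommGroup W] [Module K W] [CommRing R]
  [Algebra K R] {𝒜 : ℕ → Submodule K R} {φ : W → R}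

lemma zeroExtend_comp_mem_homPolyMaps {k : ℕ} (hφ : φ ∈ homPolyMaps W 𝒜 k) (r t : ℕ) :
    (fun y : Fin r → W => zeroExtend (φ ∘ y) t) ∈ homPolyMaps (Fin r → W) 𝒜 k := by
  unfold zeroExtend
  split_ifs with ht
  · rw [mem_homPolyMaps] at hφ ⊢
    exact ⟨comp_linearMap_mem_polyMaps (LinearMap.proj (R := K) (φ := fun _ => W) (⟨t, ht⟩ : Fin r))
      hφ.1, fun y => hφ.2 _⟩
  · exact zero_mem _

variable [GradedAlgebra 𝒜] [Infinite K] [∀ m, FiniteDimensional K (𝒜 m)] {r : ℕ}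

lemma exists_eventually_homDim_wordIdeal_eq (hφ : φ ∈ homPolyMaps W 𝒜 1) (r : ℕ) (o : List Bool)
    (e : ℕ) : ∃ m, ∀ᶠ y : Fin r → W in zariskiGeneric K (Fin r → W),
      homDim 𝒜 (wordIdeal (zeroExtend (φ ∘ y)) o) e = m :=
  ((IsPolyColonFamily.bot 𝒜).wordIdealAux (zeroExtend_comp_mem_homPolyMaps hφ r) 0 o
    ).exists_eventually_homDim_eq e

/- With the other forms fixed, a general value of the form of index `o.length` lies outside `I_o`,
so `(I_{o,s})_1` is generically larger than `(I_o)_1`. -/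
lemma eventually_zeroExtend_notMem_wordIdeal (hφ : φ ∈ homPolyMaps W 𝒜 1)
    (hspan : 𝒜 1 ≤ Submodule.span K (Set.range φ)) (o : List Bool) (ho : o.length < r) :
    ∀ᶠ y : Fin r → W in zariskiGeneric K (Fin r → W),
      ¬ 𝒜 1 ≤ (wordIdeal (zeroExtend (φ ∘ y)) o).restrictScalars K →
        zeroExtend (φ ∘ y) o.length ∉ wordIdeal (zeroExtend (φ ∘ y)) o := by
  obtain ⟨m, hm⟩ := exists_eventually_homDim_wordIdeal_eq hφ r o 1
  obtain ⟨m', hm'⟩ := exists_eventually_homDim_wordIdeal_eq hφ r (o ++ [false]) 1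
  filter_upwards [hm, hm', eventually_eventually_update (hm.and hm') ⟨o.length, ho⟩]
    with y hy hy' hupdate hnot hmem
  obtain ⟨z₀, hz₀⟩ : ∃ z, φ z ∉ (wordIdeal (zeroExtend (φ ∘ y)) o).restrictScalars K := by
    contrapose! hnot
    exact hspan.trans (Submodule.span_le.2 (Set.range_subset_iff.2 hnot))
  obtain ⟨z, ⟨hz, hz'⟩, hφz⟩ := (hupdate.and
    (eventually_zariskiGeneric_notMem (mem_homPolyMaps.1 hφ).1 hz₀)).exists
  rw [Function.comp_update, zeroExtend_update] at hz hz'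
  have hlt : m < m' := by
    rw [← hz, ← hz']
    refine homDim_lt_of_notMem (wordIdeal_le_append_singleton _ _ _)
      ((mem_homPolyMaps.1 hφ).2 z) ?_ ?_
    · simpa using mem_wordIdeal_append_false
        (Function.update (zeroExtend (φ ∘ y)) o.length (φ z)) o
    · rwa [wordIdeal_update_length]
  have heq : m' = m := by
    rw [← hy, ← hy', wordIdeal_append_false,
      sup_eq_left.2 ((Ideal.span_singleton_le_iff_mem _).2 hmem)]
  exact hlt.ne' heq

/- The generic value of `dim (I_{o,c,s})_e` is unchanged by swapping the last two forms, which turns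
`(I : a) + (b)` into `(I : b) + (a) ⊆ (I + (a)) : b`. -/
lemma eventually_homDim_append_true_false_le (hφ : φ ∈ homPolyMaps W 𝒜 1) (o : List Bool)
    (ho : o.length + 2 ≤ r) (e : ℕ) :
    ∀ᶠ y : Fin r → W in zariskiGeneric K (Fin r → W),
      homDim 𝒜 (wordIdeal (zeroExtend (φ ∘ y)) (o ++ [true, false])) e ≤
        homDim 𝒜 (wordIdeal (zeroExtend (φ ∘ y)) (o ++ [false, true])) e := by
  obtain ⟨m, hm⟩ := exists_eventually_homDim_wordIdeal_eq hφ r (o ++ [true, false]) e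
  let i : Fin r := ⟨o.length, by omega⟩
  let j : Fin r := ⟨o.length + 1, by omega⟩
  let swapForms := (LinearMap.funLeft K W (Equiv.swap i j)).toAffineMap
  have hswap : Function.Surjective swapForms :=
    LinearMap.funLeft_surjective_of_injective K W _ (Equiv.injective _)
  filter_upwards [hm, (tendsto_zariskiGeneric swapForms hswap).eventually hm] with y hy hy_swap
  have hcomp : zeroExtend (φ ∘ swapForms y) =
      zeroExtend (φ ∘ y) ∘ Equiv.swap o.length (o.length + 1) :=
    zeroExtend_comp_swap (φ ∘ y) i j
  rw [hy, ← hy_swap, hcomp]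
  exact homDim_mono (wordIdeal_comp_swap_append_true_false_le _ o)

end GeneralForms

theorem veronese_powers_satisfy_Gr_general {K W R : Type*} [Field K] [Infinite K]
    [AddCommGroup W] [Module K W] [CommRing R] [Algebra K R]
    (𝒜 : ℕ → Submodule K R) [GradedAlgebra 𝒜]
    (h0 : 𝒜 0 = (1 : Submodule K R)) (hstd : ∀ m, 𝒜 (m + 1) = 𝒜 1 * 𝒜 m)
    [FiniteDimensional K (𝒜 1)] {φ : W → R} (hφ : φ ∈ polyMaps K W R)
    (hspan : Submodule.span K (Set.range φ) = 𝒜 1) {d r : ℕ}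
    (hr : finrank K (𝒜 1) + d ≤ r + 1) :
    ∃ U : Set (Fin r → W), IsZOpen K U ∧ U.Nonempty ∧
      ∀ y ∈ U, GrProp 𝒜 (zeroExtend (φ ∘ y)) r d := by
  have := finiteDimensional_of_eq_mul 𝒜 h0 hstd
  have hφ1 : φ ∈ homPolyMaps W 𝒜 1 :=
    mem_homPolyMaps.2 ⟨hφ, fun z => hspan ▸ Submodule.subset_span ⟨z, rfl⟩⟩
  have hwords := List.finite_length_le Bool r
  have hcond₁ : ∀ᶠ y : Fin r → W in zariskiGeneric K (Fin r → W), ∀ o ∈ {o | o.length ≤ r},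
      o.length < r → ¬ 𝒜 1 ≤ (wordIdeal (zeroExtend (φ ∘ y)) o).restrictScalars K →
        zeroExtend (φ ∘ y) o.length ∉ wordIdeal (zeroExtend (φ ∘ y)) o :=
    (eventually_all_finite hwords).2 fun o _ => eventually_imp_distrib_left.2
      (eventually_zeroExtend_notMem_wordIdeal hφ1 hspan.ge o)
  have hcond₃ : ∀ᶠ y : Fin r → W in zariskiGeneric K (Fin r → W), ∀ o ∈ {o | o.length ≤ r},
      o.length + 2 ≤ r →
        homDim 𝒜 (wordIdeal (zeroExtend (φ ∘ y)) (o ++ [true, false])) (d - o.count true - 1) ≤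
        homDim 𝒜 (wordIdeal (zeroExtend (φ ∘ y)) (o ++ [false, true])) (d - o.count true - 1) :=
    (eventually_all_finite hwords).2 fun o _ => eventually_imp_distrib_left.2 fun ho =>
      eventually_homDim_append_true_false_le hφ1 o ho _
  rw [← eventually_zariskiGeneric_iff_exists_isZOpen]
  filter_upwards [hcond₁, hcond₃] with y hy₁ hy₃ o ho
  have hnotMem : ∀ o : List Bool, o.length < r →
      ¬ (HomogeneousIdeal.irrelevant 𝒜).toIdeal ≤ wordIdeal (zeroExtend (φ ∘ y)) o →
        zeroExtend (φ ∘ y) o.length ∉ wordIdeal (zeroExtend (φ ∘ y)) o := fun o ho hm =>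
    hy₁ o ho.le ho fun hle => hm (irrelevant_le_of_degree_one_le 𝒜 hstd hle)
  have hdeg : ∀ t, zeroExtend (φ ∘ y) t ∈ 𝒜 1 := fun t =>
    (mem_homPolyMaps.1 (zeroExtend_comp_mem_homPolyMaps hφ1 r t)).2 y
  exact ⟨fun hm hlt => hnotMem o hlt hm,
    irrelevant_le_wordIdeal_of_count_true_lt hstd hdeg hnotMem hr, hy₃ o ho⟩

section Veronese

variable {K M ι : Type*} [Field K] [AddCommGroup M] [Module K M] [Fintype ι] [DecidableEq ι]
  {b : ℕ}

/-- The image of the power `(∑ j, z j • X j) ^ b`, expanded by the multinomial theorem, under the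
linear map sending the monomial `m` of degree `b` to `v m`. -/
def veronesePower (v : Sym ι b → M) (z : ι → K) : M :=
  ∑ m : Sym ι b,
    ((Nat.multinomial Finset.univ (fun j => Multiset.count j (m : Multiset ι)) : K) *
      ∏ j, z j ^ Multiset.count j (m : Multiset ι)) • v m

lemma veronesePower_mem_polyMaps (v : Sym ι b → M) :
    veronesePower v ∈ polyMaps K (ι → K) M := by
  have hterm : ∀ m : Sym ι b, (fun z : ι → K =>
      ((Nat.multinomial Finset.univ (fun j => Multiset.count j (m : Multiset ι)) : K) *
        ∏ j, z j ^ Multiset.count j (m : Multiset ι)) • v m) ∈ polyMaps K (ι → K) M := by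
    intro m
    refine smul_const_mem_polyMaps (mul_mem (natCast_mem _ _) ?_) _
    simpa only [Finset.prod_fn, Pi.pow_apply, LinearMap.proj_apply] using
      prod_mem fun j (_ : j ∈ Finset.univ) => pow_mem
        (linearMap_mem_polyFuns (LinearMap.proj (R := K) (φ := fun _ : ι => K) j))
        (Multiset.count j (m : Multiset ι))
  convert sum_mem fun m (_ : m ∈ Finset.univ) => hterm m
  ext z
  simp [veronesePower]

lemma eq_zero_of_veronesePower_eq_zero [CharZero K] {v : Sym ι b → K}
    (hv : ∀ z : ι → K, veronesePower v z = 0) : v = 0 := by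
  let exponent : Sym ι b → ι →₀ ℕ := fun m => Multiset.toFinsupp (m : Multiset ι)
  have hexponent : Function.Injective exponent :=
    Multiset.toFinsupp.injective.comp Sym.coe_injective
  let coefficient : Sym ι b → K := fun m =>
    Nat.multinomial Finset.univ (fun j => Multiset.count j (m : Multiset ι)) * v m
  have hpoly : ∑ m, MvPolynomial.monomial (exponent m) (coefficient m) = 0 := by
    refine MvPolynomial.funext fun z => ?_
    rw [map_zero, ← hv z, map_sum]
    refine Finset.sum_congr rfl fun m _ => ?_
    rw [MvPolynomial.eval_monomial, Finsupp.prod_fintype _ _ (by simp), smul_eq_mul]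
    simp only [exponent, coefficient, Multiset.toFinsupp_apply]
    ring
  ext m
  have hcoefficient : coefficient m = 0 := by
    simpa [MvPolynomial.coeff_sum, MvPolynomial.coeff_monomial, hexponent.eq_iff] using
      congrArg (MvPolynomial.coeff (exponent m)) hpoly
  exact (mul_eq_zero.1 hcoefficient).resolve_left
    (Nat.cast_ne_zero.2 (Nat.multinomial_pos _ _).ne')

lemma span_range_veronesePower [CharZero K] (v : Sym ι b → M) :
    Submodule.span K (Set.range (veronesePower (K := K) v)) =
      Submodule.span K (Set.range v) := by
  apply le_antisymm <;> rw [Submodule.span_le, Set.range_subset_iff]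
  · exact fun z => sum_mem fun m _ => Submodule.smul_mem _ _ (Submodule.subset_span ⟨m, rfl⟩)
  · intro m
    by_contra hm
    obtain ⟨ψ, hψm, hψ⟩ := Submodule.exists_le_ker_of_notMem hm
    have hψv : ∀ z : ι → K, veronesePower (ψ ∘ v) z = 0 := fun z => by
      simpa [veronesePower] using hψ (Submodule.subset_span ⟨z, rfl⟩)
    exact hψm (congrFun (eq_zero_of_veronesePower_eq_zero hψv) m)

end Veronese

/-- **(Gr,d) for powers of general linear forms (Veronese case, char 0).** `R` is a
homomorphic image, by a graded surjection `g`, of the `b`-th Veronese ring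
`S = K[X_1^{a_1}⋯X_s^{a_s} : ∑ a_i = b]` (presented as the quotient of the polynomial
ring on variables indexed by the degree-`b` monomials `Sym (Fin s) b`, by the kernel of
the evaluation `π` sending the variable `m` to the corresponding monomial), the
generators going to degree-one elements of `R`.  With `n = dim_K R_1`, `d > 0` and
`r ≥ d + n - 1`, for general linear forms `l_1,…,l_r` of `K[X_1,…,X_s]`, encoded by
their coefficient tuples `y`, the `r` linear forms of `R` given by the images of
`l_t^b` — the multinomial expansion `∑ m, multinomial(m)·(∏ j, (y t j)^{m_j}) • g(X m)`
— satisfy property (Gr,d). -/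
theorem veronese_powers_satisfy_Gr
    {K R : Type*} [Field K] [CharZero K] [CommRing R] [Algebra K R]
    (𝒜 : ℕ → Submodule K R) [GradedAlgebra 𝒜]
    (h0 : 𝒜 0 = (1 : Submodule K R)) (hstd : ∀ m, 𝒜 (m + 1) = 𝒜 1 * 𝒜 m)
    [FiniteDimensional K (𝒜 1)]
    (s b : ℕ) (hb : 0 < b)
    (g : MvPolynomial (Sym (Fin s) b) K →ₐ[K] R)
    (hsurj : Function.Surjective g)
    (hker : RingHom.ker (MvPolynomial.aeval
        (fun m : Sym (Fin s) b =>
          ((m : Multiset (Fin s)).map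
            (MvPolynomial.X : Fin s → MvPolynomial (Fin s) K)).prod) :
        MvPolynomial (Sym (Fin s) b) K →ₐ[K] MvPolynomial (Fin s) K) ≤ RingHom.ker g)
    (hg1 : ∀ m, g (MvPolynomial.X m) ∈ 𝒜 1)
    (d r : ℕ) (hd : 0 < d) (hr : Module.finrank K (𝒜 1) + d ≤ r + 1) :
    ∃ U : Set (Fin r → Fin s → K), IsZOpen K U ∧ U.Nonempty ∧
      ∀ y ∈ U, GrProp 𝒜
        (fun t => if h : t < r then
            ∑ m : Sym (Fin s) b,
              (((Nat.multinomial Finset.univ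
                  (fun j => Multiset.count j (m : Multiset (Fin s)))) : K) *
                ∏ j : Fin s, y ⟨t, h⟩ j ^ Multiset.count j (m : Multiset (Fin s))) •
                g (MvPolynomial.X m)
          else 0) r d := by
  exact veronese_powers_satisfy_Gr_general 𝒜 h0 hstd
    (veronesePower_mem_polyMaps fun m => g (MvPolynomial.X m))
    ((span_range_veronesePower _).trans (degree_one_eq_span_range_X 𝒜 h0 g hsurj hg1).symm) hr
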